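/- Let T* be a complete theory in the language of T0+ such that every model of T* is a model of T0+, every model of T0+ embeds into some model of T*, and T* has quantifier elimination. Then T* does not have SOP3 (and consequently does not have SOP4). -/

import Mathlib

open FirstOrder FirstOrder.Language

/-- The unary function symbols of the language of `T0+`: `F0`, `F2`, `F3`. -/
inductive T0Func1 : Type
  | F0 | F2 | F3
  deriving DecidableEq

/-- The binary function symbols of the language of `T0+`: `F1`. -/
inductive T0Func2 : Type
  | F1
  deriving DecidableEq

/-- The unary relation symbols of the language of `T0+`: `Q0`, `Q1`, `Q2`. -/
inductive T0Rel1 : Type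
  | Q0 | Q1 | Q2
  deriving DecidableEq

/-- The first-order language of `T0+`, with unary relation symbols `Q0`, `Q1`, `Q2`,
unary function symbols `F0`, `F2`, `F3` and a binary function symbol `F1`. -/
def LT0 : FirstOrder.Language where
  Functions := fun n =>
    match n with
    | 1 => T0Func1
    | 2 => T0Func2
    | _ => Empty
  Relations := fun n =>
    match n with
    | 1 => T0Rel1
    | _ => Empty

namespace LT0

/-- `Q0` as a relation symbol of `LT0`. -/
def q0 : LT0.Relations 1 := T0Rel1.Q0
/-- `Q1` as a relation symbol of `LT0`. -/
def q1 : LT0.Relations 1 := T0Rel1.Q1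
/-- `Q2` as a relation symbol of `LT0`. -/
def q2 : LT0.Relations 1 := T0Rel1.Q2
/-- `F0` as a function symbol of `LT0`. -/
def f0 : LT0.Functions 1 := T0Func1.F0
/-- `F1` as a function symbol of `LT0`. -/
def f1 : LT0.Functions 2 := T0Func2.F1
/-- `F2` as a function symbol of `LT0`. -/
def f2 : LT0.Functions 1 := T0Func1.F2
/-- `F3` as a function symbol of `LT0`. -/
def f3 : LT0.Functions 1 := T0Func1.F3

/-- The `i`-th bound variable as a term. -/
def v {n : ℕ} (i : Fin n) : LT0.Term (Empty ⊕ Fin n) :=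
  FirstOrder.Language.Term.var (Sum.inr i)

/-- `Q0`, `Q1`, `Q2` form a partition of the universe. -/
def axPartition : LT0.Sentence :=
  ∀' ((q0.boundedFormula₁ (v 0) ⊔ q1.boundedFormula₁ (v 0) ⊔ q2.boundedFormula₁ (v 0)) ⊓
      ∼(q0.boundedFormula₁ (v 0) ⊓ q1.boundedFormula₁ (v 0)) ⊓
      ∼(q0.boundedFormula₁ (v 0) ⊓ q2.boundedFormula₁ (v 0)) ⊓
      ∼(q1.boundedFormula₁ (v 0) ⊓ q2.boundedFormula₁ (v 0)))

/-- `∀x (Q1(x) → Q0(F0(x)))`. -/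
def axF0 : LT0.Sentence :=
  ∀' (q1.boundedFormula₁ (v 0) ⟹ q0.boundedFormula₁ (f0.apply₁ (v 0)))

/-- `∀z ∀x (Q2(z) ∧ Q0(x) → Q1(F1(z,x)))`. -/
def axF1 : LT0.Sentence :=
  ∀' ∀' ((q2.boundedFormula₁ (v 0) ⊓ q0.boundedFormula₁ (v 1)) ⟹
    q1.boundedFormula₁ (f1.apply₂ (v 0) (v 1)))

/-- `∀x (Q0(x) → Q2(F2(x)))`. -/
def axF2 : LT0.Sentence :=
  ∀' (q0.boundedFormula₁ (v 0) ⟹ q2.boundedFormula₁ (f2.apply₁ (v 0)))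

/-- `∀z (Q2(z) → Q0(F3(z)))`. -/
def axF3 : LT0.Sentence :=
  ∀' (q2.boundedFormula₁ (v 0) ⟹ q0.boundedFormula₁ (f3.apply₁ (v 0)))

/-- `∀z ∀x (Q2(z) ∧ Q0(x) → F0(F1(z,x)) = x)`. -/
def axF0F1 : LT0.Sentence :=
  ∀' ∀' ((q2.boundedFormula₁ (v 0) ⊓ q0.boundedFormula₁ (v 1)) ⟹
    (f0.apply₁ (f1.apply₂ (v 0) (v 1)) =' v 1))

/-- `∀x (Q0(x) → F3(F2(x)) = x)`. -/
def axF3F2 : LT0.Sentence :=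
  ∀' (q0.boundedFormula₁ (v 0) ⟹ (f3.apply₁ (f2.apply₁ (v 0)) =' v 0))

end LT0

/-- The theory `T0+`. -/
def T0Plus : LT0.Theory :=
  {LT0.axPartition, LT0.axF0, LT0.axF1, LT0.axF2, LT0.axF3, LT0.axF0F1, LT0.axF3F2}

/-- A first-order theory `T` has the `n`-strong order property `SOP_n` if there are a formula
`φ(x̄,ȳ)` (with `lg x̄ = lg ȳ = m`), a model `M` of `T` and tuples `ā_k` (`k < ω`) from `M` such
that `M ⊨ φ[ā_k, ā_l]` for all `k < l < ω`, while `M` satisfies the negation of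
`∃ x̄_0 … x̄_{n-1} ⋀ {φ(x̄_l, x̄_k) : k = l + 1 mod n}`. -/
def SOP {L : FirstOrder.Language.{u, v}} (n : ℕ) (T : L.Theory) : Prop :=
  ∃ (m : ℕ) (φ : L.Formula (Fin m ⊕ Fin m)) (M : Theory.ModelType.{u, v, max u v} T)
    (a : ℕ → Fin m → M),
    (∀ k l : ℕ, k < l → φ.Realize (Sum.elim (a k) (a l))) ∧
    ¬ ∃ b : ℕ → Fin m → M, ∀ l < n, φ.Realize (Sum.elim (b l) (b ((l + 1) % n)))

/-
Let `(a_k)` be an infinite sequence in `M` with `φ(a_k, a_l)` for all `k < l`. In the ultrapower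
`A = M^ℕ / u` the sequence has a class `α`, and the iterated ultrapower `B = A^ℕ / u` contains two
elementary copies of `A`, its diagonal copy and the ultrapower of the diagonal copy of `M` in `A`,
which meet only in points of equal origin in `A`. The pair formed by the two copies of `α` satisfies
`φ`.

For `n ≥ 3`, `n` copies of `B` can be arranged in a cycle in which the second copy of `A` in each is
the first copy of `A` in the next one. The axioms of `T0+` only ask that `F1(z, x)` be an element of
`Q1` above `x`, so on a pair `(z, x)` not contained in one copy of `B` the value `F1(F2(x), x)` will
do, and the union is a model of `T0+`. It embeds into a model of `T*`, where the embeddings of the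
copies of `B` are elementary by model completeness, so that the copies of `α` form an `n`-cycle for
`φ`. Having such a cycle is a first-order property, so `M` has one too.
-/

open Structure Filter

universe u v w w'

section Ultrapower

variable {α : Type*} (u : Ultrafilter α) {L : FirstOrder.Language.{u, v}}

/-- The ultrapower of `M` along the ultrafilter `u`, as a constant ultraproduct. -/
abbrev Ultrapower (M : Type w) : Type _ := (u : Filter α).Product fun _ => M

namespace Ultrapower

variable {M : Type w} {N : Type*} [L.Structure M] [L.Structure N]

/-- The class of a function `α → M` in the ultrapower of `M`. -/
def mk (x : α → M) : Ultrapower u M :=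
  (x : (u : Filter α).Product fun _ => M)

variable {u} in
theorem mk_eq_mk {x y : α → M} : mk u x = mk u y ↔ ∀ᶠ i in (u : Filter α), x i = y i :=
  Quotient.eq''

theorem mk_surjective : Function.Surjective (mk u : (α → M) → Ultrapower u M) :=
  fun x => Quotient.inductionOn' x fun f => ⟨f, rfl⟩

variable [Nonempty M] [Nonempty N]

theorem realize_mk {β : Type*} (φ : L.Formula β) (x : β → α → M) :
    (φ.Realize fun k => mk u (x k)) ↔ ∀ᶠ i in (u : Filter α), φ.Realize fun k => x k i :=
  Ultraproduct.realize_formula_cast φ x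

theorem realize_sumElim_mk {β γ : Type*} (φ : L.Formula (β ⊕ γ)) (x : β → α → M) (y : γ → α → M) :
    φ.Realize (Sum.elim (fun k => mk u (x k)) fun k => mk u (y k)) ↔
      ∀ᶠ i in (u : Filter α), φ.Realize (Sum.elim (fun k => x k i) fun k => y k i) := by
  convert! realize_mk u φ (Sum.elim x y) using 2
  · ext (k | k) <;> rfl
  · ext i
    congr! 1
    ext (k | k) <;> rfl

variable (L M) in
/-- The diagonal embedding of a structure into its ultrapower. -/
def diagonal : M ↪ₑ[L] Ultrapower u M where
  toFun m := mk u fun _ => m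
  map_formula' _ φ x := (realize_mk u φ fun k _ => x k).trans eventually_const

/-- The elementary embedding of ultrapowers induced by an elementary embedding. -/
def map (f : M ↪ₑ[L] N) : Ultrapower u M ↪ₑ[L] Ultrapower u N where
  toFun := Quotient.map' (fun x i => f (x i)) fun _ _ h => h.mono fun _ => congrArg f
  map_formula' n φ x := by
    choose y hy using fun k => mk_surjective u (x k)
    obtain rfl : (fun k => mk u (y k)) = x := funext hy
    exact (realize_mk u φ fun k i => f (y k i)).trans <|
      (eventually_congr (.of_forall fun i => f.map_formula φ fun k => y k i)).trans
        (realize_mk u φ y).symm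

theorem eq_of_map_diagonal_eq_diagonal {x y : Ultrapower u M}
    (h : map u (diagonal u L M) x = diagonal u L (Ultrapower u M) y) : x = y := by
  obtain ⟨f, rfl⟩ := mk_surjective u x
  have hf : ∀ᶠ i in (u : Filter α), diagonal u L M (f i) = y := mk_eq_mk.1 h
  obtain ⟨i, rfl⟩ := hf.exists
  exact mk_eq_mk.2 (hf.mono fun _ hj => (diagonal u L M).injective hj)

theorem realize_map_diagonal_diagonal {β γ : Type*} (φ : L.Formula (β ⊕ γ))
    (x : β → α → M) (y : γ → α → M) :
    φ.Realize (Sum.elim (fun k => map u (diagonal u L M) (mk u (x k)))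
        fun k => diagonal u L (Ultrapower u M) (mk u (y k))) ↔
      ∀ᶠ i in (u : Filter α), ∀ᶠ j in (u : Filter α),
        φ.Realize (Sum.elim (fun k => x k i) fun k => y k j) :=
  (realize_sumElim_mk u φ (fun k i => diagonal u L M (x k i)) fun k _ => mk u (y k)).trans <|
    eventually_congr (.of_forall fun i => realize_sumElim_mk u φ (fun k _ => x k i) y)

end Ultrapower

end Ultrapower

section NSOP

variable {L : FirstOrder.Language.{u, v}}

/-- A theory is model complete if every embedding between two of its models is elementary. As in
`SOP`, the models live in the universe of the language. -/
def IsModelComplete (T : L.Theory) : Prop :=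
  ∀ (M N : Theory.ModelType.{u, v, max u v} T) (f : M ↪[L] N),
    ∃ g : M ↪ₑ[L] N, g.toEmbedding = f

theorem isModelComplete_of_forall_exists_isQF {T : L.Theory}
    (h : ∀ (n : ℕ) (φ : L.Formula (Fin n)), ∃ ψ : L.Formula (Fin n), ψ.IsQF ∧ T ⊨ᵇ (φ ⇔ ψ)) :
    IsModelComplete T := by
  refine fun M N f => ⟨⟨f, fun n φ x => ?_⟩, rfl⟩
  obtain ⟨ψ, hψ, hφψ⟩ := h n φ
  have hiff : φ ⇔[T] ψ := hφψ
  rw [hiff.realize_iff, hiff.realize_iff, Formula.Realize, Formula.Realize,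
    ← hψ.realize_embedding f, Subsingleton.elim (f ∘ default) default]

/-- Cycles of length `n` can be amalgamated in `T`: whenever `B` contains two copies of `A` that
meet only in points of equal origin in `A`, there are copies of `B` indexed cyclically by `ZMod n`
in which the second copy of `A` in each is the first copy of `A` in the next one. -/
def AmalgamatesCycles (T : L.Theory) (n : ℕ) : Prop :=
  ∀ (A B : Theory.ModelType.{u, v, max u v} T) (e₀ e₁ : A ↪[L] B),
    (∀ a a', e₀ a = e₁ a' → a = a') →
    ∃ (N : Theory.ModelType.{u, v, max u v} T) (g : ZMod n → B ↪[L] N),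
      ∀ i a, g i (e₁ a) = g (i + 1) (e₀ a)

theorem AmalgamatesCycles.of_embeds {T T' : L.Theory} {n : ℕ} (h : AmalgamatesCycles T n)
    (hmodels : ∀ M : Theory.ModelType.{u, v, max u v} T', M ⊨ T)
    (hembeds : ∀ M : Theory.ModelType.{u, v, max u v} T,
      ∃ N : Theory.ModelType.{u, v, max u v} T', Nonempty (M ↪[L] N)) :
    AmalgamatesCycles T' n := by
  intro A B e₀ e₁ he
  obtain ⟨N, g, hg⟩ := h (hmodels A).bundled (hmodels B).bundled e₀ e₁ he
  obtain ⟨N', ⟨f⟩⟩ := hembeds N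
  exact ⟨N', fun i => f.comp (g i), fun i a => congrArg f (hg i a)⟩

theorem exists_realize_iff_of_elementaryEmbedding {M N γ : Type*} [L.Structure M] [L.Structure N]
    [Finite γ] (f : M ↪ₑ[L] N) (φ : L.Formula γ) :
    (∃ b : γ → M, φ.Realize b) ↔ ∃ b : γ → N, φ.Realize b := by
  have h := f.map_sentence ((φ.relabel Sum.inr : L.Formula (Empty ⊕ γ)).iExs γ)
  simpa only [Sentence.Realize, Formula.realize_iExs, Formula.realize_relabel,
    Sum.elim_comp_inr] using h

theorem exists_forall_realize_of_elementaryEmbedding {M N β ι : Type*} [L.Structure M]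
    [L.Structure N] [Finite β] [Finite ι] (f : M ↪ₑ[L] N) (φ : L.Formula (β ⊕ β)) (σ : ι → ι)
    {b : ι → β → N} (hb : ∀ i, φ.Realize (Sum.elim (b i) (b (σ i)))) :
    ∃ b : ι → β → M, ∀ i, φ.Realize (Sum.elim (b i) (b (σ i))) := by
  let θ : L.Formula (ι × β) :=
    Formula.iInf fun i => φ.relabel (Sum.elim (Prod.mk i) (Prod.mk (σ i)))
  have hθ : θ.Realize (Function.uncurry b) := by
    simp only [θ, Formula.realize_iInf, Formula.realize_relabel, Sum.comp_elim]
    exact hb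
  obtain ⟨c, hc⟩ := (exists_realize_iff_of_elementaryEmbedding f θ).2 ⟨_, hθ⟩
  simp only [θ, Formula.realize_iInf, Formula.realize_relabel, Sum.comp_elim] at hc
  exact ⟨Function.curry c, hc⟩

theorem not_SOP_of_amalgamatesCycles {T : L.Theory} (hT : IsModelComplete T) {n : ℕ} [NeZero n]
    (hn : AmalgamatesCycles T n) : ¬ SOP n T := by
  rintro ⟨m, φ, M, a, ha, hcycle⟩
  let u := hyperfilter ℕ
  let A := Ultrapower u M
  let B := Ultrapower u A
  let d : M ↪ₑ[L] A := Ultrapower.diagonal u L M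
  let e₀ : A ↪ₑ[L] B := Ultrapower.map u d
  let e₁ : A ↪ₑ[L] B := Ultrapower.diagonal u L A
  let α (k : Fin m) : A := Ultrapower.mk u fun i => a i k
  have hα : φ.Realize (Sum.elim (e₀ ∘ α) (e₁ ∘ α)) := by
    refine (Ultrapower.realize_map_diagonal_diagonal u φ _ _).2 (.of_forall fun i => ?_)
    have hlt : ∀ᶠ j in (u : Filter ℕ), i < j :=
      (eventually_gt_atTop i).filter_mono Nat.hyperfilter_le_atTop
    exact hlt.mono fun j => ha i j
  have hA : A ⊨ T := (d.theory_model_iff T).1 M.is_model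
  have hB : B ⊨ T := (e₁.theory_model_iff T).1 hA
  obtain ⟨N, g, hg⟩ := hn hA.bundled hB.bundled e₀.toEmbedding e₁.toEmbedding
    fun _ _ => Ultrapower.eq_of_map_diagonal_eq_diagonal u
  choose g' hg' using fun i => hT hB.bundled N (g i)
  obtain rfl : (fun i => (g' i).toEmbedding) = g := funext hg'
  have hN (i : ZMod n) :
      φ.Realize (Sum.elim (g' i ∘ e₀ ∘ α) (g' (i + 1) ∘ e₀ ∘ α)) := by
    have hnext : g' (i + 1) ∘ e₀ ∘ α = g' i ∘ e₁ ∘ α := funext fun k => (hg i (α k)).symm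
    rw [hnext, ← Sum.comp_elim]
    exact ((g' i).map_formula φ _).2 hα
  obtain ⟨b, hb⟩ :=
    exists_forall_realize_of_elementaryEmbedding ((g' 0).comp (e₁.comp d)) φ (· + 1) hN
  refine hcycle ⟨fun l => b l, fun l _ => ?_⟩
  simpa using hb l

end NSOP

section Gluing

variable {L : FirstOrder.Language.{u, v}} {ι : Type w} {C : ι → Type w'} [∀ i, L.Structure (C i)]

variable (L C) in
/-- Data for gluing a family of structures along a coherent system of partial isomorphisms between
them. The partial isomorphism from `C i` to `C j` is encoded by its graph `Rel i j`; the last two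
fields say that its domain is a substructure and that it preserves the structure. -/
structure GluingData where
  /-- `Rel i j c d` means that `c : C i` and `d : C j` are to be identified. -/
  Rel : ∀ i j, C i → C j → Prop
  rel_self : ∀ {i} {c d : C i}, Rel i i c d ↔ c = d
  symm : ∀ {i j} {c : C i} {d : C j}, Rel i j c d → Rel j i d c
  trans : ∀ {i j k} {c : C i} {d : C j} {e : C k}, Rel i j c d → Rel j k d e → Rel i k c e
  rel_funMap : ∀ {i j n} (F : L.Functions n) {c : Fin n → C i} {d : Fin n → C j},
    (∀ k, Rel i j (c k) (d k)) → Rel i j (funMap F c) (funMap F d)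
  relMap : ∀ {i j n} (r : L.Relations n) {c : Fin n → C i} {d : Fin n → C j},
    (∀ k, Rel i j (c k) (d k)) → RelMap r c → RelMap r d

namespace GluingData

/-- Identification of points of the disjoint union, as a setoid. -/
def setoid (G : GluingData L C) : Setoid (Σ i, C i) where
  r p q := G.Rel p.1 q.1 p.2 q.2
  iseqv := ⟨fun _ => G.rel_self.2 rfl, G.symm, G.trans⟩

/-- The structure obtained by gluing. On tuples that do not come from a single `C i` no relation
holds, and functions are given by the rule `ext` applied to arbitrary representatives. The rule is
an argument of the type, not of its structure, so that instance search finds the structure. -/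
def Glued (G : GluingData L C) (_ext : ∀ n, L.Functions n → (Fin n → Σ i, C i) → Σ i, C i) :
    Type max w w' :=
  Quotient G.setoid

variable (G : GluingData L C) (ext : ∀ n, L.Functions n → (Fin n → Σ i, C i) → Σ i, C i)

namespace Glued

/-- The class of a point of `C i`. -/
def mk (i : ι) (c : C i) : G.Glued ext := Quotient.mk G.setoid ⟨i, c⟩

variable {G ext}

theorem mk_eq_mk {i j : ι} {c : C i} {d : C j} : mk G ext i c = mk G ext j d ↔ G.Rel i j c d :=
  Quotient.eq (r := G.setoid)

theorem exists_mk_eq (x : G.Glued ext) : ∃ i c, mk G ext i c = x :=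
  Quotient.inductionOn x fun p => ⟨p.1, p.2, rfl⟩

open Classical in
noncomputable instance : L.Structure (G.Glued ext) where
  funMap {n} F x :=
    if h : ∃ (i : ι) (c : Fin n → C i), (fun k => mk G ext i (c k)) = x then
      mk G ext h.choose (funMap F h.choose_spec.choose)
    else Quotient.mk G.setoid (ext n F fun k => Quotient.out (x k))
  RelMap {n} r x := ∃ (i : ι) (c : Fin n → C i), (fun k => mk G ext i (c k)) = x ∧ RelMap r c

theorem funMap_mk {i : ι} {n : ℕ} (F : L.Functions n) (c : Fin n → C i) :
    funMap F (fun k => mk G ext i (c k)) = mk G ext i (funMap F c) := by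
  have h : ∃ (j : ι) (d : Fin n → C j),
    (fun k => mk G ext j (d k)) = fun k => mk G ext i (c k) := ⟨i, c, rfl⟩
  exact (dif_pos h).trans <|
    mk_eq_mk.2 (G.rel_funMap F fun k => mk_eq_mk.1 (congrFun h.choose_spec.choose_spec k))

theorem relMap_mk {i : ι} {n : ℕ} (r : L.Relations n) (c : Fin n → C i) :
    RelMap r (fun k => mk G ext i (c k)) ↔ RelMap r c :=
  ⟨fun ⟨_, _, h, hd⟩ => G.relMap r (fun k => mk_eq_mk.1 (congrFun h k)) hd,
    fun h => ⟨i, c, rfl, h⟩⟩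

theorem funMap_mk₁ (F : L.Functions 1) (i : ι) (c : C i) :
    funMap F ![mk G ext i c] = mk G ext i (funMap F ![c]) := by
  rw [← funMap_mk]
  congr! 1
  ext k
  fin_cases k
  rfl

theorem funMap_mk₂ (F : L.Functions 2) (i : ι) (c d : C i) :
    funMap F ![mk G ext i c, mk G ext i d] = mk G ext i (funMap F ![c, d]) := by
  rw [← funMap_mk]
  congr! 1
  ext k
  fin_cases k <;> rfl

theorem relMap_mk₁ (r : L.Relations 1) (i : ι) (c : C i) :
    RelMap r ![mk G ext i c] ↔ RelMap r ![c] := by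
  rw [← relMap_mk (G := G) (ext := ext)]
  congr! 1
  ext k
  fin_cases k
  rfl

theorem funMap_eq_mk_or_eq_ext {n : ℕ} (F : L.Functions n) (x : Fin n → G.Glued ext) :
    (∃ (i : ι) (c : Fin n → C i), x = fun k => mk G ext i (c k)) ∨
      ∃ p : Fin n → Σ i, C i, (x = fun k => mk G ext (p k).1 (p k).2) ∧
        funMap F x = mk G ext (ext n F p).1 (ext n F p).2 := by
  by_cases h : ∃ (i : ι) (c : Fin n → C i), (fun k => mk G ext i (c k)) = x
  · exact .inl (by simpa only [eq_comm] using h)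
  · exact .inr ⟨fun k => Quotient.out (x k), funext fun k => (Quotient.out_eq (x k)).symm,
      dif_neg h⟩

variable (G ext) in
/-- The canonical embedding of `C i` into the glued structure. -/
def embedding (i : ι) : C i ↪[L] G.Glued ext where
  toFun := mk G ext i
  inj' _ _ h := G.rel_self.1 (mk_eq_mk.1 h)
  map_fun' F c := (funMap_mk F c).symm
  map_rel' r c := relMap_mk r c

end Glued

end GluingData

end Gluing

section CycleGluing

variable {A B : Type w} {n : ℕ}

/-- Points `b` and `b'` of the copies of `B` indexed by `i` and `j` are identified in the cycle of
copies of `B` in which the image of `e₁` in each copy is the image of `e₀` in the next one. Points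
at which `e₀` and `e₁` agree end up in all copies, which is the last case. -/
def CycleRel (e₀ e₁ : A → B) (i j : ZMod n) (b b' : B) : Prop :=
  (i = j ∧ b = b') ∨ (j = i + 1 ∧ ∃ a, e₁ a = b ∧ e₀ a = b') ∨
    (i = j + 1 ∧ ∃ a, e₀ a = b ∧ e₁ a = b') ∨ ∃ a, e₀ a = e₁ a ∧ e₀ a = b ∧ e₀ a = b'

namespace CycleRel

theorem next (e₀ e₁ : A → B) (i : ZMod n) (a : A) :
    CycleRel e₀ e₁ i (i + 1) (e₁ a) (e₀ a) :=
  .inr (.inl ⟨rfl, a, rfl, rfl⟩)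

variable {e₀ e₁ : A → B} {i j k : ZMod n} {b b' b'' : B}

theorem symm (h : CycleRel e₀ e₁ i j b b') : CycleRel e₀ e₁ j i b' b := by
  rcases h with ⟨rfl, rfl⟩ | ⟨rfl, a, rfl, rfl⟩ | ⟨rfl, a, rfl, rfl⟩ | ⟨a, ha, rfl, rfl⟩
  · exact .inl ⟨rfl, rfl⟩
  · exact .inr (.inr (.inl ⟨rfl, a, rfl, rfl⟩))
  · exact .inr (.inl ⟨rfl, a, rfl, rfl⟩)
  · exact .inr (.inr (.inr ⟨a, ha, rfl, rfl⟩))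

theorem trans (h₀ : e₀.Injective) (h₁ : e₁.Injective) (h : ∀ a a', e₀ a = e₁ a' → a = a')
    (hb : CycleRel e₀ e₁ i j b b') (hb' : CycleRel e₀ e₁ j k b' b'') :
    CycleRel e₀ e₁ i k b b'' := by
  unfold CycleRel at *
  -- A point shared by three consecutive copies is `e₀ a = e₁ a'` in the middle one, so `a = a'` and
  -- it is shared by all copies. Injectivity of `e₀` and `e₁` covers going forth and back.
  grind [Function.Injective]

theorem self_iff [Nontrivial (ZMod n)] : CycleRel e₀ e₁ i i b b' ↔ b = b' := by
  simp only [CycleRel, true_and, left_eq_add, one_ne_zero, false_and, false_or, or_iff_left_iff_imp]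
  rintro ⟨a, -, rfl, rfl⟩
  rfl

variable {L : FirstOrder.Language.{u, v}} [L.Structure A] [L.Structure B]

theorem exists_span (h₂ : (2 : ZMod n) ≠ 0) (e₀ e₁ : A ↪[L] B) (i j : ZMod n) :
    ∃ (E : Type w) (_ : L.Structure E) (l r : E ↪[L] B),
      ∀ b b', CycleRel e₀ e₁ i j b b' ↔ ∃ x, l x = b ∧ r x = b' := by
  have := nontrivial_of_ne _ _ h₂
  by_cases hij : i = j
  · refine ⟨B, inferInstance, .refl L B, .refl L B, fun b b' => ?_⟩
    subst hij
    simp [CycleRel.self_iff]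
  by_cases hj : j = i + 1
  · refine ⟨A, inferInstance, e₁, e₀, fun b b' => ?_⟩
    unfold CycleRel
    grind
  by_cases hi : i = j + 1
  · refine ⟨A, inferInstance, e₀, e₁, fun b b' => ?_⟩
    unfold CycleRel
    grind
  · let E := e₀.toHom.eqLocus e₁.toHom
    refine ⟨E, inferInstance, e₀.comp E.subtype, e₀.comp E.subtype, fun b b' => ?_⟩
    simp [CycleRel, hij, hi, hj, E, and_left_comm]

theorem exists_span_of_forall (h₂ : (2 : ZMod n) ≠ 0) {e₀ e₁ : A ↪[L] B} {κ : Type*}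
    {c d : κ → B} (hcd : ∀ k, CycleRel e₀ e₁ i j (c k) (d k)) :
    ∃ (E : Type w) (_ : L.Structure E) (l r : E ↪[L] B) (x : κ → E),
      l ∘ x = c ∧ r ∘ x = d ∧ ∀ y, CycleRel e₀ e₁ i j (l y) (r y) := by
  obtain ⟨E, _, l, r, hE⟩ := exists_span h₂ e₀ e₁ i j
  choose x hl hr using fun k => (hE _ _).1 (hcd k)
  exact ⟨E, _, l, r, x, funext hl, funext hr, fun y => (hE _ _).2 ⟨y, rfl, rfl⟩⟩

end CycleRel

variable {L : FirstOrder.Language.{u, v}} [L.Structure A] [L.Structure B]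

/-- The data for gluing copies of `B`, indexed by `ZMod n`, into a cycle: the image of `e₁` in each
copy is identified with the image of `e₀` in the next one. -/
def GluingData.cycle (h₂ : (2 : ZMod n) ≠ 0) (e₀ e₁ : A ↪[L] B)
    (h : ∀ a a', e₀ a = e₁ a' → a = a') : GluingData L fun _ : ZMod n => B where
  Rel := CycleRel e₀ e₁
  rel_self :=
    have := nontrivial_of_ne _ _ h₂
    CycleRel.self_iff
  symm := CycleRel.symm
  trans := CycleRel.trans e₀.injective e₁.injective h
  rel_funMap F _ _ hcd := by
    obtain ⟨E, _, l, r, x, rfl, rfl, hlr⟩ := CycleRel.exists_span_of_forall h₂ hcd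
    rw [← l.map_fun, ← r.map_fun]
    exact hlr (funMap F x)
  relMap R _ _ hcd := by
    obtain ⟨E, _, l, r, x, rfl, rfl, -⟩ := CycleRel.exists_span_of_forall h₂ hcd
    rw [l.map_rel, r.map_rel]
    exact id

end CycleGluing

section T0Plus

theorem model_T0Plus_iff {M : Type*} [LT0.Structure M] : M ⊨ T0Plus ↔
    (∀ x : M, (RelMap LT0.q0 ![x] ∨ RelMap LT0.q1 ![x] ∨ RelMap LT0.q2 ![x]) ∧
      ¬(RelMap LT0.q0 ![x] ∧ RelMap LT0.q1 ![x]) ∧ ¬(RelMap LT0.q0 ![x] ∧ RelMap LT0.q2 ![x]) ∧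
      ¬(RelMap LT0.q1 ![x] ∧ RelMap LT0.q2 ![x])) ∧
    (∀ x : M, RelMap LT0.q1 ![x] → RelMap LT0.q0 ![funMap LT0.f0 ![x] ]) ∧
    (∀ z x : M, RelMap LT0.q2 ![z] → RelMap LT0.q0 ![x] →
      RelMap LT0.q1 ![funMap LT0.f1 ![z, x] ]) ∧
    (∀ x : M, RelMap LT0.q0 ![x] → RelMap LT0.q2 ![funMap LT0.f2 ![x] ]) ∧
    (∀ z : M, RelMap LT0.q2 ![z] → RelMap LT0.q0 ![funMap LT0.f3 ![z] ]) ∧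
    (∀ z x : M, RelMap LT0.q2 ![z] → RelMap LT0.q0 ![x] →
      funMap LT0.f0 ![funMap LT0.f1 ![z, x] ] = x) ∧
    ∀ x : M, RelMap LT0.q0 ![x] → funMap LT0.f3 ![funMap LT0.f2 ![x] ] = x := by
  have snoc_zero (x : M) : (Fin.snoc default x : Fin 1 → M) 0 = x := rfl
  have snoc_snoc_zero (z x : M) :
      (Fin.snoc (Fin.snoc default z : Fin 1 → M) x : Fin 2 → M) 0 = z := rfl
  have snoc_snoc_one (z x : M) :
      (Fin.snoc (Fin.snoc default z : Fin 1 → M) x : Fin 2 → M) 1 = x := rfl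
  simp only [T0Plus, Theory.model_iff, Set.mem_insert_iff, Set.mem_singleton_iff,
    forall_eq_or_imp, forall_eq, Sentence.Realize, Formula.Realize, LT0.axPartition, LT0.axF0,
    LT0.axF1, LT0.axF2, LT0.axF3, LT0.axF0F1, LT0.axF3F2, LT0.v, BoundedFormula.realize_all,
    BoundedFormula.realize_imp, BoundedFormula.realize_inf, BoundedFormula.realize_sup,
    BoundedFormula.realize_not, BoundedFormula.realize_rel₁, BoundedFormula.realize_bdEqual,
    Term.realize_functions_apply₁, Term.realize_functions_apply₂, Term.realize_var,
    Sum.elim_inr, snoc_zero, snoc_snoc_zero, snoc_snoc_one, and_imp, and_assoc, or_assoc]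

variable {ι : Type w} {C : ι → Type w'} [∀ i, LT0.Structure (C i)]

/-- The rule defining the functions of a glued structure on tuples that do not come from a single
piece: `F1(z, x) = F1(F2(x), x)`, computed in the piece of `x`. If `x` is in `Q0` then `F2(x)` is in
`Q2`, so this value lies in `Q1` above `x`, which is all that the axioms ask of it. A one-element
tuple always comes from a single piece, so the value given for unary functions is immaterial. -/
def t0PlusExt : ∀ n, LT0.Functions n → (Fin n → Σ i, C i) → Σ i, C i
  | 1, _, p => p 0
  | 2, _, p => ⟨(p 1).1, funMap LT0.f1 ![funMap LT0.f2 ![(p 1).2], (p 1).2]⟩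
  | 0, F, _ => Empty.elim F
  | _ + 3, F, _ => Empty.elim F

open GluingData GluingData.Glued

variable (G : GluingData LT0 C)

theorem funMap_f1_glued (z x : G.Glued t0PlusExt) :
    (∃ i c d, z = mk G t0PlusExt i c ∧ x = mk G t0PlusExt i d) ∨
      ∃ i d, x = mk G t0PlusExt i d ∧
        funMap LT0.f1 ![z, x] = mk G t0PlusExt i (funMap LT0.f1 ![funMap LT0.f2 ![d], d]) := by
  rcases funMap_eq_mk_or_eq_ext LT0.f1 ![z, x] with ⟨i, c, h⟩ | ⟨p, h, hp⟩
  · exact .inl ⟨i, c 0, c 1, congrFun h 0, congrFun h 1⟩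
  · exact .inr ⟨(p 1).1, (p 1).2, congrFun h 1, hp⟩

theorem glued_model_T0Plus (hC : ∀ i, C i ⊨ T0Plus) : G.Glued t0PlusExt ⊨ T0Plus := by
  choose hQ hF0 hF1 hF2 hF3 hF0F1 hF3F2 using fun i => model_T0Plus_iff.1 (hC i)
  refine model_T0Plus_iff.2 ⟨fun x => ?_, fun x => ?_, fun z x => ?_, fun x => ?_, fun z => ?_,
    fun z x => ?_, fun x => ?_⟩
  · obtain ⟨i, c, rfl⟩ := exists_mk_eq x
    simpa only [relMap_mk₁] using hQ i c
  · obtain ⟨i, c, rfl⟩ := exists_mk_eq x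
    simpa only [relMap_mk₁, funMap_mk₁] using hF0 i c
  · rcases funMap_f1_glued G z x with ⟨i, c, d, rfl, rfl⟩ | ⟨i, d, rfl, h⟩
    · simpa only [relMap_mk₁, funMap_mk₂] using hF1 i c d
    · simp only [h, relMap_mk₁]
      exact fun _ hd => hF1 i _ d (hF2 i d hd) hd
  · obtain ⟨i, c, rfl⟩ := exists_mk_eq x
    simpa only [relMap_mk₁, funMap_mk₁] using hF2 i c
  · obtain ⟨i, c, rfl⟩ := exists_mk_eq z
    simpa only [relMap_mk₁, funMap_mk₁] using hF3 i c
  · rcases funMap_f1_glued G z x with ⟨i, c, d, rfl, rfl⟩ | ⟨i, d, rfl, h⟩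
    · simp only [relMap_mk₁, funMap_mk₁, funMap_mk₂]
      exact fun hc hd => congrArg _ (hF0F1 i c d hc hd)
    · simp only [h, relMap_mk₁, funMap_mk₁]
      exact fun _ hd => congrArg _ (hF0F1 i _ d (hF2 i d hd) hd)
  · obtain ⟨i, c, rfl⟩ := exists_mk_eq x
    simp only [relMap_mk₁, funMap_mk₁]
    exact fun hc => congrArg _ (hF3F2 i c hc)

theorem amalgamatesCycles_T0Plus {n : ℕ} (h₂ : (2 : ZMod n) ≠ 0) : AmalgamatesCycles T0Plus n := by
  intro A B e₀ e₁ h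
  let G : GluingData LT0 fun _ : ZMod n => B := .cycle h₂ e₀ e₁ h
  have hG : G.Glued t0PlusExt ⊨ T0Plus := glued_model_T0Plus G fun _ => B.is_model
  have : Nonempty (G.Glued t0PlusExt) := B.nonempty'.map (mk G t0PlusExt 0)
  exact ⟨hG.bundled, embedding G t0PlusExt, fun i a =>
    (mk_eq_mk (G := G) (ext := t0PlusExt)).2 (CycleRel.next e₀ e₁ i a)⟩

end T0Plus

theorem tstar_nsop3_general (Tstar : LT0.Theory) (hTstar : IsModelComplete Tstar)
    (hmodels : ∀ (M : Type) [LT0.Structure M], M ⊨ Tstar → M ⊨ T0Plus)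
    (hembeds : ∀ (M : Type) [LT0.Structure M] [Nonempty M], M ⊨ T0Plus →
      ∃ N : Theory.ModelType.{0, 0, 0} Tstar, Nonempty (M ↪[LT0] N))
    {n : ℕ} (hn : 3 ≤ n) : ¬ SOP n Tstar := by
  have : NeZero n := ⟨by lia⟩
  have h₂ : (2 : ZMod n) ≠ 0 := fun h =>
    Nat.not_dvd_of_pos_of_lt two_pos hn ((ZMod.natCast_eq_zero_iff 2 n).1 h)
  exact not_SOP_of_amalgamatesCycles hTstar <| (amalgamatesCycles_T0Plus h₂).of_embeds
    (fun M => hmodels M M.is_model) fun M => hembeds M M.is_model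

/-- If `T*` is a complete theory in the language of `T0+` such that every model of `T*` is a
model of `T0+`, every model of `T0+` embeds into some model of `T*`, and `T*` has quantifier
elimination, then `T*` does not have `SOP_3`, and consequently does not have `SOP_4`. -/
theorem tstar_nsop3 (Tstar : LT0.Theory)
    (hcomplete : Tstar.IsComplete)
    (hmodels : ∀ (M : Type) [LT0.Structure M], M ⊨ Tstar → M ⊨ T0Plus)
    (hembeds : ∀ (M : Type) [LT0.Structure M] [Nonempty M], M ⊨ T0Plus →
      ∃ N : Theory.ModelType.{0, 0, 0} Tstar, Nonempty (M ↪[LT0] N))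
    (hqe : ∀ (n : ℕ) (φ : LT0.Formula (Fin n)),
      ∃ ψ : LT0.Formula (Fin n), ψ.IsQF ∧ Tstar ⊨ᵇ (φ ⇔ ψ)) :
    ¬ SOP 3 Tstar ∧ ¬ SOP 4 Tstar := by
  have hmc : IsModelComplete Tstar := isModelComplete_of_forall_exists_isQF hqe
  exact ⟨tstar_nsop3_general Tstar hmc hmodels hembeds le_rfl,
    tstar_nsop3_general Tstar hmc hmodels hembeds (by norm_num)⟩
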